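/- Given a recollement (S, T, U), a Serre functor F on T with quasi-inverse F', the composite functor i^* ∘ F' ∘ i_* : S → S is a left Serre functor on S. -/

import Mathlib

/-!
Setting: `k` a field; `S`, `T`, `U` skeletally small `k`-linear triangulated categories
with finite-dimensional Hom-spaces, `T` with split idempotents.  A recollement
`(S, T, U)` as in [BBD], and (right/left) Serre functors in the sense of
Reiten–Van den Bergh.
-/

open CategoryTheory CategoryTheory.Limits CategoryTheory.Pretriangulated

universe v₁ v₂ v₃ u₁ u₂ u₃ u₄

/-- A right Serre structure on an endofunctor `F` of a `k`-linear category `C`: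
isomorphisms `C(X, Y) ≅ C(Y, F X)^∨`, natural in `X` and `Y`.
A right Serre functor is a functor `F` equipped with such a structure. -/
structure RightSerreStructure (k : Type u₄) [Field k] (C : Type u₁) [Category.{v₁} C]
    [Preadditive C] [CategoryTheory.Linear k C] (F : C ⥤ C) where
  equiv : ∀ X Y : C, (X ⟶ Y) ≃ₗ[k] Module.Dual k (Y ⟶ F.obj X)
  naturality_left : ∀ {X X' Y : C} (f : X' ⟶ X) (φ : X ⟶ Y) (u : Y ⟶ F.obj X'),
    equiv X' Y (f ≫ φ) u = equiv X Y φ (u ≫ F.map f)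
  naturality_right : ∀ {X Y Y' : C} (φ : X ⟶ Y) (g : Y ⟶ Y') (u : Y' ⟶ F.obj X),
    equiv X Y' (φ ≫ g) u = equiv X Y φ (g ≫ u)

/-- A left Serre structure on an endofunctor `F'` of a `k`-linear category `C`:
isomorphisms `C(X, Y) ≅ C(F' Y, X)^∨`, natural in `X` and `Y`.
A left Serre functor is a functor `F'` equipped with such a structure. -/
structure LeftSerreStructure (k : Type u₄) [Field k] (C : Type u₁) [Category.{v₁} C]
    [Preadditive C] [CategoryTheory.Linear k C] (F' : C ⥤ C) where
  equiv : ∀ X Y : C, (X ⟶ Y) ≃ₗ[k] Module.Dual k (F'.obj Y ⟶ X)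
  naturality_left : ∀ {X X' Y : C} (f : X' ⟶ X) (φ : X ⟶ Y) (u : F'.obj Y ⟶ X'),
    equiv X' Y (f ≫ φ) u = equiv X Y φ (u ≫ f)
  naturality_right : ∀ {X Y Y' : C} (φ : X ⟶ Y) (g : Y ⟶ Y') (u : F'.obj Y' ⟶ X),
    equiv X Y' (φ ≫ g) u = equiv X Y φ (F'.map g ≫ u)

/-- A Serre functor: an essentially surjective right Serre functor. -/
structure SerreFunctor (k : Type u₄) [Field k] (C : Type u₁) [Category.{v₁} C]
    [Preadditive C] [CategoryTheory.Linear k C] where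
  F : C ⥤ C
  rightSerre : RightSerreStructure k C F
  essSurj : F.EssSurj

/-- A recollement of triangulated categories `(S, T, U)`:
triangulated functors `i_* = iSt : S ⥤ T`, `i^* = iUp, i^! = iSh : T ⥤ S`,
`j^* = jUp : T ⥤ U`, `j_! = jLo, j_* = jSt : U ⥤ T` with the adjunctions,
vanishing, full faithfulness and distinguished-triangle conditions of [BBD, sec. 1.4]. -/
structure Recollement (S : Type u₁) (T : Type u₂) (U : Type u₃)
    [Category.{v₁} S] [Category.{v₂} T] [Category.{v₃} U]
    [HasZeroObject S] [HasZeroObject T] [HasZeroObject U]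
    [Preadditive S] [Preadditive T] [Preadditive U]
    [HasShift S ℤ] [HasShift T ℤ] [HasShift U ℤ]
    [∀ n : ℤ, (shiftFunctor S n).Additive] [∀ n : ℤ, (shiftFunctor T n).Additive]
    [∀ n : ℤ, (shiftFunctor U n).Additive]
    [Pretriangulated S] [Pretriangulated T] [Pretriangulated U] where
  /-- `i_* : S ⥤ T` -/
  iSt : S ⥤ T
  /-- `i^* : T ⥤ S` -/
  iUp : T ⥤ S
  /-- `i^! : T ⥤ S` -/
  iSh : T ⥤ S
  /-- `j^* : T ⥤ U` -/
  jUp : T ⥤ U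
  /-- `j_! : U ⥤ T` -/
  jLo : U ⥤ T
  /-- `j_* : U ⥤ T` -/
  jSt : U ⥤ T
  [commShift_iSt : iSt.CommShift ℤ]
  [commShift_iUp : iUp.CommShift ℤ]
  [commShift_iSh : iSh.CommShift ℤ]
  [commShift_jUp : jUp.CommShift ℤ]
  [commShift_jLo : jLo.CommShift ℤ]
  [commShift_jSt : jSt.CommShift ℤ]
  [isTriangulated_iSt : iSt.IsTriangulated]
  [isTriangulated_iUp : iUp.IsTriangulated]
  [isTriangulated_iSh : iSh.IsTriangulated]
  [isTriangulated_jUp : jUp.IsTriangulated]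
  [isTriangulated_jLo : jLo.IsTriangulated]
  [isTriangulated_jSt : jSt.IsTriangulated]
  /-- `(i^*, i_*)` is an adjoint pair. -/
  adj₁ : iUp ⊣ iSt
  /-- `(i_*, i^!)` is an adjoint pair. -/
  adj₂ : iSt ⊣ iSh
  /-- `(j_!, j^*)` is an adjoint pair. -/
  adj₃ : jLo ⊣ jUp
  /-- `(j^*, j_*)` is an adjoint pair. -/
  adj₄ : jUp ⊣ jSt
  /-- `j^* ∘ i_* = 0`. -/
  zero_comp : ∀ X : S, IsZero (jUp.obj (iSt.obj X))
  fullyFaithful_iSt : iSt.FullyFaithful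
  fullyFaithful_jLo : jLo.FullyFaithful
  fullyFaithful_jSt : jSt.FullyFaithful
  /-- The distinguished triangle `i_* i^! X ⟶ X ⟶ j_* j^* X ⟶`, whose morphisms into and
  out of `X` are the counit of `(i_*, i^!)` and the unit of `(j^*, j_*)`. -/
  triangle_a : ∀ X : T, ∃ δ : jSt.obj (jUp.obj X) ⟶ (iSt.obj (iSh.obj X))⟦(1 : ℤ)⟧,
    Triangle.mk (adj₂.counit.app X) (adj₄.unit.app X) δ ∈ distTriang T
  /-- The distinguished triangle `j_! j^* X ⟶ X ⟶ i_* i^* X ⟶`, whose morphisms into and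
  out of `X` are the counit of `(j_!, j^*)` and the unit of `(i^*, i_*)`. -/
  triangle_b : ∀ X : T, ∃ δ : iSt.obj (iUp.obj X) ⟶ (jLo.obj (jUp.obj X))⟦(1 : ℤ)⟧,
    Triangle.mk (adj₃.counit.app X) (adj₁.unit.app X) δ ∈ distTriang T

/-!
A left Serre structure on `G` amounts to functionals on the spaces `Hom(G Y, Y)` for which the
composition pairings `Hom(G Y, X) × Hom(X, Y) → k` are nondegenerate and which are compatible with
composition.  In this form Serre duality passes from `T` to `S`: the functional on `Hom(F' Y, Y)`
evaluates the Serre duality of `F` at the isomorphism `Y ≅ F F' Y`, and the adjunction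
`(i^*, i_*)` identifies `Hom(i^* F' i_* Y, Y)` with `Hom(F' i_* Y, i_* Y)`.

The functor `i_*` is additive but need not be `k`-linear, so this yields Serre duality for the
linear structure pulled back to `S` along `i_*`, not for the given one.  However, the existence of
a left Serre structure does not depend on the linear structure.  Two linear structures over fields
`K` and `L` make every Hom-space a module over the center `R` of the category.  A `K`-linear
functional `t` on a module becomes an `L`-linear one by composing `m ↦ (r ↦ t (r m))` with a fixed
`L`-linear functional on `Hom_K(R, K)`.  Nondegeneracy survives if the latter vanishes on no nonzero
`R`-submodule of finite dimension over `K`, and such a functional exists because a submodule of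
`Hom_K(R, K)` of finite dimension over `K` is determined by its annihilator, so that the simple
ones are independent.
-/

section Algebra

theorem exists_isSimpleModule_le (K : Type*) {R V : Type*} [Ring K] [IsArtinianRing K]
    [Ring R] [SMul K R] [AddCommGroup V] [Module R V] [Module K V] [IsScalarTower K R V]
    {Q : Submodule R V} [Module.Finite K Q] (hQ : Q ≠ ⊥) :
    ∃ P ≤ Q, IsSimpleModule R P ∧ Module.Finite K P := by
  have : IsArtinian R Q := isArtinian_of_tower K inferInstance
  have : IsAtomic (Set.Iic Q) := Q.mapIic.isAtomic_iff.mp inferInstance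
  obtain ⟨P, hP, _⟩ := (eq_bot_or_exists_atom_le (⊤ : Set.Iic Q)).resolve_left
    fun h => hQ (congrArg Subtype.val h)
  exact ⟨P, P.2, isSimpleModule_iff_isAtom.mpr hP.of_isAtom_coe_Iic,
    Module.Finite.of_injective ((Submodule.inclusion P.2).restrictScalars K)
      (Submodule.inclusion_injective P.2)⟩

theorem exists_dual_apply_ne_zero_of_iSupIndep (L : Type*) {R V ι : Type*} [Field L] [Ring R]
    [SMul L R] [AddCommGroup V] [Module R V] [Module L V] [IsScalarTower L R V]
    {p : ι → Submodule R V} (hp : iSupIndep p) (hne : ∀ i, p i ≠ ⊥) :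
    ∃ l : Module.Dual L V, ∀ i, ∃ x ∈ p i, l x ≠ 0 := by
  choose x hx hx0 using fun i => (p i).ne_bot_iff.mp (hne i)
  have hpL : iSupIndep fun i => (p i).restrictScalars L :=
    (iSupIndep_iff_finsetSum_eq_zero_imp_eq_zero _).mpr
      ((iSupIndep_iff_finsetSum_eq_zero_imp_eq_zero p).mp hp)
  obtain ⟨l, hl⟩ := Module.exists_dual_forall_apply_eq_one
    (linearIndepOn_univ_iff.mpr (hpL.linearIndependent _ hx hx0))
  exact ⟨l, fun i => ⟨x i, hx i, by simp [hl i (Set.mem_univ i)]⟩⟩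

end Algebra

/-- The coinduced module `Hom_K(R, K)`, on which `R` acts through the argument:
`(r • f) s = f (r * s)`.  It is a type synonym of `Module.Dual K R` because the scalars do not act
through the values. -/
def Coinduced (K R : Type*) [Field K] [CommRing R] [Algebra K R] : Type _ := Module.Dual K R

namespace Coinduced

variable {K L R : Type*} [Field K] [Field L] [CommRing R] [Algebra K R] [Algebra L R]

instance : AddCommGroup (Coinduced K R) := inferInstanceAs (AddCommGroup (Module.Dual K R))

instance : FunLike (Coinduced K R) R K := inferInstanceAs (FunLike (Module.Dual K R) R K)

instance : LinearMapClass (Coinduced K R) K R K :=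
  inferInstanceAs (LinearMapClass (Module.Dual K R) K R K)

@[ext]
theorem ext {f g : Coinduced K R} (h : ∀ r, f r = g r) : f = g := DFunLike.ext f g h

@[simp]
theorem zero_apply (r : R) : (0 : Coinduced K R) r = 0 := rfl

@[simp]
theorem add_apply (f g : Coinduced K R) (r : R) : (f + g) r = f r + g r := rfl

instance : SMul R (Coinduced K R) where
  smul r f := LinearMap.comp (show Module.Dual K R from f) (LinearMap.mulLeft K r)

@[simp]
theorem smul_apply (r : R) (f : Coinduced K R) (s : R) : (r • f) s = f (r * s) := rfl

instance : Module R (Coinduced K R) where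
  one_smul f := by ext; simp
  mul_smul r r' f := by ext s; simp [mul_left_comm r' r, mul_assoc]
  smul_zero r := by ext; simp
  smul_add r f g := by ext; simp
  add_smul r r' f := by ext; simp [add_mul]
  zero_smul f := by ext; simp

instance : Module L (Coinduced K R) := Module.compHom _ (algebraMap L R)

instance : IsScalarTower L R (Coinduced K R) := IsScalarTower.of_algebraMap_smul fun _ _ => rfl

variable (K R) in
/-- The identification of the coinduced module, as a `K`-vector space, with the dual of `R`. -/
def equivDual : Coinduced K R ≃ₗ[K] Module.Dual K R where
  __ := AddEquiv.refl (Module.Dual K R)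
  map_smul' a f := LinearMap.ext fun s => by
    change f (algebraMap K R a * s) = a * f s
    rw [← Algebra.smul_def, map_smul, smul_eq_mul]

@[simp]
theorem equivDual_apply (f : Coinduced K R) (r : R) : equivDual K R f r = f r := rfl

theorem mem_annihilator_iff {Q : Submodule R (Coinduced K R)} {r : R} :
    r ∈ Q.annihilator ↔ ∀ f ∈ Q, f r = 0 := by
  rw [Submodule.mem_annihilator]
  refine ⟨fun h f hf => ?_, fun h f hf => ?_⟩
  · simpa using DFunLike.congr_fun (h f hf) 1
  · ext s
    simpa [mul_comm] using h (s • f) (Q.smul_mem s hf)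

theorem mem_iff_forall_annihilator {Q : Submodule R (Coinduced K R)} [Module.Finite K Q]
    {f : Coinduced K R} : f ∈ Q ↔ ∀ r ∈ Q.annihilator, f r = 0 := by
  let W : Submodule K (Module.Dual K R) := (Q.restrictScalars K).map (equivDual K R).toLinearMap
  have : Module.Finite K (Q.restrictScalars K) := ‹Module.Finite K Q›
  have hW : W.dualCoannihilator.dualAnnihilator = W := Subspace.dualCoannihilator_dualAnnihilator_eq
  have hfW : f ∈ Q ↔ equivDual K R f ∈ W := by simp [W]
  have hann (r : R) : r ∈ W.dualCoannihilator ↔ r ∈ Q.annihilator := by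
    rw [Submodule.mem_dualCoannihilator, mem_annihilator_iff]
    exact Set.forall_mem_image
  rw [hfW, ← hW, Submodule.mem_dualAnnihilator]
  simp [hann]

theorem annihilator_injective {P Q : Submodule R (Coinduced K R)} [Module.Finite K P]
    [Module.Finite K Q] (h : P.annihilator = Q.annihilator) : P = Q := by
  ext f
  rw [mem_iff_forall_annihilator, mem_iff_forall_annihilator, h]

theorem isotypicComponent_eq_self (P : Submodule R (Coinduced K R)) [Module.Finite K P] :
    isotypicComponent R (Coinduced K R) P = P := by
  refine le_antisymm (sSup_le ?_) P.le_isotypicComponent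
  rintro Q ⟨e⟩
  have : Module.Finite K Q := Module.Finite.equiv (e.symm.restrictScalars K)
  exact (annihilator_injective e.annihilator_eq).le

variable (K R) in
theorem sSupIndep_isSimpleModule_finite :
    sSupIndep {P : Submodule R (Coinduced K R) | IsSimpleModule R P ∧ Module.Finite K P} :=
  (sSupIndep_isotypicComponents R (Coinduced K R)).mono
    fun P ⟨hP, _⟩ => ⟨P, hP, (isotypicComponent_eq_self P).symm⟩

/-- The functional `l` vanishes identically on no nonzero `R`-submodule of the coinduced module of
finite dimension over `K`. -/
def DetectsFinite (l : Coinduced K R →ₗ[L] L) : Prop :=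
  ∀ Q : Submodule R (Coinduced K R), Module.Finite K Q → Q ≠ ⊥ → ∃ f ∈ Q, l f ≠ 0

variable (K L R) in
theorem exists_detectsFinite : ∃ l : Coinduced K R →ₗ[L] L, DetectsFinite l := by
  obtain ⟨l, hl⟩ := exists_dual_apply_ne_zero_of_iSupIndep L
    ((sSupIndep_iff _).mp (sSupIndep_isSimpleModule_finite K R))
    fun P => (isSimpleModule_iff_isAtom.mp P.2.1).ne_bot
  refine ⟨l, fun Q _ hQ => ?_⟩
  obtain ⟨P, hPQ, hP⟩ := exists_isSimpleModule_le K hQ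
  obtain ⟨f, hf, hlf⟩ := hl ⟨P, hP⟩
  exact ⟨f, hPQ hf, hlf⟩

section Transfer

variable {M N : Type*} [AddCommGroup M] [Module R M] [Module K M] [IsScalarTower K R M]
  [AddCommGroup N] [Module R N] [Module K N] [IsScalarTower K R N]

/-- The `R`-linear map `m ↦ (r ↦ t (r • m))` into the coinduced module corresponding to a
functional `t` on `M`. -/
def ofDual (t : Module.Dual K M) : M →ₗ[R] Coinduced K R where
  toFun m := (equivDual K R).symm (t ∘ₗ (LinearMap.toSpanSingleton R M m).restrictScalars K)
  map_add' m m' := by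
    ext r
    change t (r • (m + m')) = t (r • m) + t (r • m')
    rw [smul_add, map_add]
  map_smul' s m := by
    ext r
    change t (r • s • m) = t ((s * r) • m)
    rw [smul_smul, mul_comm]

@[simp]
theorem ofDual_apply (t : Module.Dual K M) (m : M) (r : R) : ofDual t m r = t (r • m) := rfl

variable [Module L M] [IsScalarTower L R M] [Module L N] [IsScalarTower L R N]

/-- The passage from `K`-linear to `L`-linear functionals on `R`-modules induced by a functional `l`
on the coinduced module. -/
def transfer (l : Coinduced K R →ₗ[L] L) (t : Module.Dual K M) : Module.Dual L M :=
  l ∘ₗ (ofDual t).restrictScalars L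

theorem transfer_comp (l : Coinduced K R →ₗ[L] L) (t : Module.Dual K N) (g : M →ₗ[R] N) (m : M) :
    transfer l t (g m) = transfer l (t ∘ₗ g.restrictScalars K) m := by
  refine congrArg l (ext fun r => ?_)
  simp

theorem DetectsFinite.eq_zero_of_transfer_eq_zero {l : Coinduced K R →ₗ[L] L}
    (hl : DetectsFinite l) [Module.Finite K M] {t : Module.Dual K M}
    (ht : ∀ m, transfer l t m = 0) : t = 0 := by
  by_contra h0
  obtain ⟨m, hm⟩ := DFunLike.ne_iff.mp h0
  have hfin : Module.Finite K (ofDual (R := R) t).range :=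
    Module.Finite.range ((ofDual (R := R) t).restrictScalars K)
  have hne : (ofDual (R := R) t).range ≠ ⊥ := fun h =>
    hm (by simpa using DFunLike.congr_fun (LinearMap.congr_fun (LinearMap.range_eq_bot.mp h) m) 1)
  obtain ⟨_, ⟨m', rfl⟩, hm'⟩ := hl _ hfin hne
  exact hm' (ht m')

end Transfer

end Coinduced

/-- The action of the center of a preadditive category on the Hom-groups as a linear structure. -/
instance catCenterLinear (C : Type u₁) [Category.{v₁} C] [Preadditive C] :
    CategoryTheory.Linear (CatCenter C) C where
  homModule X Y :=
    { one_smul f := by simp [CatCenter.smul_eq]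
      mul_smul z w f := by simp [CatCenter.smul_eq]
      smul_zero z := by simp [CatCenter.smul_eq]
      smul_add z f g := by simp [CatCenter.smul_eq]
      add_smul z w f := by simp [CatCenter.smul_eq]
      zero_smul f := by simp [CatCenter.smul_eq] }
  smul_comp X Y Z z f g := by simp [CatCenter.smul_eq, CatCenter.naturality]
  comp_smul X Y Z f z g := by simp [CatCenter.smul_eq]

/-- A left Serre structure on `G` in terms of functionals `trace Y` on `Hom(G Y, Y)`: the pairings
`(φ, u) ↦ trace Y (u ≫ φ)` of `Hom(X, Y)` with `Hom(G Y, X)` are nondegenerate, and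
`trace_comp_comm` makes them natural in `Y`. -/
structure LeftSerreTrace (k : Type u₄) [Field k] (C : Type u₁) [Category.{v₁} C]
    [Preadditive C] [CategoryTheory.Linear k C] (G : C ⥤ C) where
  trace : ∀ Y : C, Module.Dual k (G.obj Y ⟶ Y)
  trace_comp_comm : ∀ {Y Y' : C} (g : Y ⟶ Y') (u : G.obj Y' ⟶ Y),
    trace Y' (u ≫ g) = trace Y (G.map g ≫ u)
  eq_zero_of_left : ∀ {X Y : C} (φ : X ⟶ Y), (∀ u : G.obj Y ⟶ X, trace Y (u ≫ φ) = 0) → φ = 0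
  eq_zero_of_right : ∀ {X Y : C} (u : G.obj Y ⟶ X), (∀ φ : X ⟶ Y, trace Y (u ≫ φ) = 0) → u = 0

namespace LeftSerreTrace

section Field

variable {k : Type*} [Field k] {C : Type u₁} [Category.{v₁} C] [Preadditive C]
  [CategoryTheory.Linear k C] {G : C ⥤ C}

/-- The pairing `(φ, u) ↦ trace Y (u ≫ φ)` of `Hom(X, Y)` with `Hom(G Y, X)`. -/
def pairing (τ : LeftSerreTrace k C G) (X Y : C) : (X ⟶ Y) →ₗ[k] Module.Dual k (G.obj Y ⟶ X) :=
  LinearMap.mk₂ k (fun φ u => τ.trace Y (u ≫ φ)) (by simp) (by simp) (by simp) (by simp)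

theorem pairing_isPerfPair (τ : LeftSerreTrace k C G) (X Y : C) [FiniteDimensional k (X ⟶ Y)] :
    (τ.pairing X Y).IsPerfPair :=
  .of_injective
    ((injective_iff_map_eq_zero _).mpr fun φ h => τ.eq_zero_of_left φ (DFunLike.congr_fun h))
    ((injective_iff_map_eq_zero _).mpr fun u h => τ.eq_zero_of_right u (DFunLike.congr_fun h))

/-- The left Serre structure given by the pairings, which are perfect because they are nondegenerate
and the Hom-spaces are finite-dimensional. -/
noncomputable def leftSerreStructure [∀ X Y : C, FiniteDimensional k (X ⟶ Y)]
    (τ : LeftSerreTrace k C G) : LeftSerreStructure k C G where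
  equiv X Y := have := τ.pairing_isPerfPair X Y; (τ.pairing X Y).toPerfPair
  naturality_left f φ u := by simp [pairing]
  naturality_right φ g u := by simp [pairing, ← τ.trace_comp_comm]

end Field

section ChangeOfField

variable {K L : Type*} [Field K] [Field L] {C : Type u₁} [Category.{v₁} C] [Preadditive C]
  [CategoryTheory.Linear K C] [CategoryTheory.Linear L C] {G : C ⥤ C}

open Coinduced in
/-- Change of field along compatible actions of `K` and `L` through a commutative ring `R`. -/
def transfer {R : Type*} [CommRing R] [Algebra K R] [Algebra L R] [CategoryTheory.Linear R C]
    [∀ X Y : C, IsScalarTower K R (X ⟶ Y)] [∀ X Y : C, IsScalarTower L R (X ⟶ Y)]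
    [∀ X Y : C, FiniteDimensional K (X ⟶ Y)] {l : Coinduced K R →ₗ[L] L} (hl : DetectsFinite l)
    (τ : LeftSerreTrace K C G) : LeftSerreTrace L C G where
  trace Y := Coinduced.transfer l (τ.trace Y)
  trace_comp_comm {Y Y'} g u :=
    calc Coinduced.transfer l (τ.trace Y') (u ≫ g)
      _ = Coinduced.transfer l
            (τ.trace Y' ∘ₗ (Linear.rightComp R (G.obj Y') g).restrictScalars K) u :=
          transfer_comp l _ (Linear.rightComp R (G.obj Y') g) u
      _ = Coinduced.transfer l
            (τ.trace Y ∘ₗ (Linear.leftComp R Y (G.map g)).restrictScalars K) u := by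
          congr 2
          exact LinearMap.ext (τ.trace_comp_comm g)
      _ = Coinduced.transfer l (τ.trace Y) (G.map g ≫ u) :=
          (transfer_comp l _ (Linear.leftComp R Y (G.map g)) u).symm
  eq_zero_of_left {X Y} φ h := τ.eq_zero_of_left φ <| DFunLike.congr_fun <|
    hl.eq_zero_of_transfer_eq_zero fun u =>
      (transfer_comp l (τ.trace Y) (Linear.rightComp R (G.obj Y) φ) u).symm.trans (h u)
  eq_zero_of_right {X Y} u h := τ.eq_zero_of_right u <| DFunLike.congr_fun <|
    hl.eq_zero_of_transfer_eq_zero fun φ =>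
      (transfer_comp l (τ.trace Y) (Linear.leftComp R Y u) φ).symm.trans (h φ)

open scoped IsMulCommutative in
variable (L) in
theorem nonempty_changeField [∀ X Y : C, FiniteDimensional K (X ⟶ Y)]
    (τ : LeftSerreTrace K C G) : Nonempty (LeftSerreTrace L C G) := by
  let := (Linear.toCatCenter K C).toAlgebra
  let := (Linear.toCatCenter L C).toAlgebra
  have (X Y : C) : IsScalarTower K (CatCenter C) (X ⟶ Y) :=
    .of_algebraMap_smul fun a f => (Linear.comp_smul _ _ _ f a (𝟙 Y)).trans (by simp)
  have (X Y : C) : IsScalarTower L (CatCenter C) (X ⟶ Y) :=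
    .of_algebraMap_smul fun a f => (Linear.comp_smul _ _ _ f a (𝟙 Y)).trans (by simp)
  obtain ⟨l, hl⟩ := Coinduced.exists_detectsFinite K L (CatCenter C)
  exact ⟨τ.transfer hl⟩

end ChangeOfField

/-- The trace on `i ⋙ G ⋙ p` for a fully faithful functor `i` with left adjoint `p`, given by the
identification of `Hom(p G i Y, Y)` with `Hom(G i Y, i Y)`. -/
def ofAdjunction {k : Type*} [Field k] {C : Type u₁} {D : Type u₂} [Category.{v₁} C]
    [Category.{v₂} D] [Preadditive C] [Preadditive D] [CategoryTheory.Linear k C]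
    [CategoryTheory.Linear k D] {i : C ⥤ D} [i.Additive] [i.Linear k] {p : D ⥤ C}
    (hi : i.FullyFaithful) (adj : p ⊣ i) {G : D ⥤ D} (τ : LeftSerreTrace k D G) :
    LeftSerreTrace k C (i ⋙ G ⋙ p) where
  trace Y := τ.trace (i.obj Y) ∘ₗ
    Linear.leftComp k (i.obj Y) (adj.unit.app (G.obj (i.obj Y))) ∘ₗ i.mapLinearMap k
  trace_comp_comm {Y Y'} g u := by
    have := τ.trace_comp_comm (i.map g) (adj.unit.app _ ≫ i.map u)
    simpa using this
  eq_zero_of_left {X Y} φ h := hi.map_injective <| by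
    rw [i.map_zero]
    refine τ.eq_zero_of_left _ fun u => ?_
    obtain ⟨v, rfl⟩ := (adj.homEquiv _ _).surjective u
    simpa [adj.homEquiv_unit] using h v
  eq_zero_of_right {X Y} u h := by
    have hu : adj.homEquiv _ _ u = 0 := by
      refine τ.eq_zero_of_right _ fun φ => ?_
      obtain ⟨φ, rfl⟩ := hi.map_surjective φ
      simpa [adj.homEquiv_unit] using h φ
    exact (adj.homEquiv _ _).injective (hu.trans (by simp [adj.homEquiv_unit]))

end LeftSerreTrace

namespace RightSerreStructure

/-- The left Serre trace on a right inverse `G` of a right Serre functor `F`, sending `u : G Y ⟶ Y`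
to the value of its Serre dual at `Y ≅ F G Y`. -/
def leftSerreTrace {k : Type*} [Field k] {C : Type u₁} [Category.{v₁} C] [Preadditive C]
    [CategoryTheory.Linear k C] {F G : C ⥤ C} (E : RightSerreStructure k C F) (ε : G ⋙ F ≅ 𝟭 C) :
    LeftSerreTrace k C G where
  trace Y := Module.Dual.eval k _ (ε.inv.app Y) ∘ₗ (E.equiv (G.obj Y) Y).toLinearMap
  trace_comp_comm {Y Y'} g u :=
    calc E.equiv (G.obj Y') Y' (u ≫ g) (ε.inv.app Y')
      _ = E.equiv (G.obj Y') Y u (g ≫ ε.inv.app Y') := E.naturality_right u g _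
      _ = E.equiv (G.obj Y') Y u (ε.inv.app Y ≫ F.map (G.map g)) := by
          congr 1
          exact ε.inv.naturality g
      _ = E.equiv (G.obj Y) Y (G.map g ≫ u) (ε.inv.app Y) := (E.naturality_left _ u _).symm
  eq_zero_of_left {X Y} φ h := by
    have hφ : φ ≫ ε.inv.app Y = 0 := by
      refine (Module.forall_dual_apply_eq_zero_iff k _).mp fun f => ?_
      obtain ⟨u, rfl⟩ := (E.equiv (G.obj Y) X).surjective f
      exact (E.naturality_right u φ _).symm.trans (h u)
    exact (cancel_mono (ε.inv.app Y)).mp (hφ.trans zero_comp.symm)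
  eq_zero_of_right {X Y} u h := by
    refine (E.equiv (G.obj Y) X).map_eq_zero_iff.mp (LinearMap.ext fun w => ?_)
    calc E.equiv (G.obj Y) X u w
      _ = E.equiv (G.obj Y) X u ((w ≫ ε.hom.app Y) ≫ ε.inv.app Y) := by simp
      _ = E.equiv (G.obj Y) Y (u ≫ w ≫ ε.hom.app Y) (ε.inv.app Y) :=
          (E.naturality_right u _ _).symm
      _ = 0 := h _

end RightSerreStructure

section FullyFaithful

variable (K : Type*) [Semiring K] {C : Type u₁} {D : Type u₂} [Category.{v₁} C] [Category.{v₂} D]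
  [Preadditive C] [Preadditive D] [CategoryTheory.Linear K D] {i : C ⥤ D} [i.Additive]

/-- The `K`-linear structure pulled back along a fully faithful additive functor `i`, so that
`i.map (a • f) = a • i.map f`. -/
@[reducible]
def linearOfFullyFaithful (hi : i.FullyFaithful) : CategoryTheory.Linear K C :=
  letI (X Y : C) : SMul K (X ⟶ Y) := ⟨fun a f => hi.preimage (a • i.map f)⟩
  have map_smul {X Y : C} (a : K) (f : X ⟶ Y) : i.map (a • f) = a • i.map f := hi.map_preimage _
  { homModule X Y :=
      Function.Injective.module K i.mapAddHom (fun _ _ h => hi.map_injective h) map_smul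
    smul_comp X Y Z a f g := hi.map_injective (by simp [map_smul])
    comp_smul X Y Z f a g := hi.map_injective (by simp [map_smul]) }

theorem linear_of_linearOfFullyFaithful (hi : i.FullyFaithful) :
    letI := linearOfFullyFaithful K hi
    i.Linear K :=
  letI := linearOfFullyFaithful K hi
  { map_smul f a := hi.map_preimage (a • i.map f) }

end FullyFaithful

theorem finite_hom_of_faithful (K : Type*) [Ring K] [IsNoetherianRing K] {C : Type u₁}
    {D : Type u₂} [Category.{v₁} C] [Category.{v₂} D] [Preadditive C] [Preadditive D]
    [CategoryTheory.Linear K C] [CategoryTheory.Linear K D] (i : C ⥤ D) [i.Additive] [i.Linear K]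
    [i.Faithful] (X Y : C) [Module.Finite K (i.obj X ⟶ i.obj Y)] : Module.Finite K (X ⟶ Y) :=
  .of_injective (i.mapLinearMap K) i.map_injective

theorem recollement_left_serre_structure_on_S_general
    {k : Type*} {K : Type*} [Field k] [Field K] {S : Type u₁} {T : Type u₂}
    [Category.{v₁} S] [Category.{v₂} T] [Preadditive S] [Preadditive T]
    [CategoryTheory.Linear k S] [CategoryTheory.Linear K T]
    {i : S ⥤ T} [i.Additive] (hi : i.FullyFaithful) {p : T ⥤ S} (adj : p ⊣ i)
    [∀ X Y : S, FiniteDimensional k (X ⟶ Y)]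
    [∀ X Y : S, FiniteDimensional K (i.obj X ⟶ i.obj Y)]
    {F F' : T ⥤ T} (E : RightSerreStructure K T F) (ε : F' ⋙ F ≅ 𝟭 T) :
    Nonempty (LeftSerreStructure k S (i ⋙ F' ⋙ p)) := by
  let := linearOfFullyFaithful K hi
  have := linear_of_linearOfFullyFaithful K hi
  have := hi.faithful
  have (X Y : S) := finite_hom_of_faithful K i X Y
  obtain ⟨τ⟩ := ((E.leftSerreTrace ε).ofAdjunction hi adj).nonempty_changeField k
  exact ⟨τ.leftSerreStructure⟩

/-- Given a recollement `(S, T, U)` and a Serre functor `F` on `T` with quasi-inverse `F'`,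
the composite functor `i^* ∘ F' ∘ i_* : S ⥤ S` is a left Serre functor on `S`. -/
theorem recollement_left_serre_structure_on_S
    {k : Type u₄} [Field k]
    {S : Type u₁} {T : Type u₂} {U : Type u₃}
    [Category.{v₁} S] [Category.{v₂} T] [Category.{v₃} U]
    [HasZeroObject S] [HasZeroObject T] [HasZeroObject U]
    [Preadditive S] [Preadditive T] [Preadditive U]
    [CategoryTheory.Linear k S] [CategoryTheory.Linear k T] [CategoryTheory.Linear k U]
    [HasShift S ℤ] [HasShift T ℤ] [HasShift U ℤ]
    [∀ n : ℤ, (shiftFunctor S n).Additive] [∀ n : ℤ, (shiftFunctor T n).Additive]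
    [∀ n : ℤ, (shiftFunctor U n).Additive]
    [Pretriangulated S] [Pretriangulated T] [Pretriangulated U]
    [EssentiallySmall.{v₁} S] [EssentiallySmall.{v₂} T] [EssentiallySmall.{v₃} U]
    [∀ X Y : S, FiniteDimensional k (X ⟶ Y)]
    [∀ X Y : T, FiniteDimensional k (X ⟶ Y)]
    [∀ X Y : U, FiniteDimensional k (X ⟶ Y)]
    [IsIdempotentComplete T]
    (R : Recollement S T U)
    (SF : SerreFunctor k T) (F' : T ⥤ T)
    (η : SF.F ⋙ F' ≅ 𝟭 T) (ε : F' ⋙ SF.F ≅ 𝟭 T) :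
    Nonempty (LeftSerreStructure k S (R.iSt ⋙ F' ⋙ R.iUp)) := by
  let := R.commShift_iSt
  have := R.isTriangulated_iSt
  exact recollement_left_serre_structure_on_S_general R.fullyFaithful_iSt R.adj₁ SF.rightSerre ε
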